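/- Let n ≥ 1 and 0 < α, s < 1. For any complex-valued Schwartz function φ on ℝⁿ×ℝ, the function (x,t) ↦ D_left^α φ(x,t) + (-Δ)^s φ(x,t) is integrable on ℝⁿ×ℝ, and for every (ξ,ρ) ∈ ℝⁿ×ℝ one has 𝓕[D_left^α φ + (-Δ)^s φ](ξ,ρ) = ((iρ)^α + |ξ|^{2s})·𝓕φ(ξ,ρ), where (iρ)^α denotes the principal branch of the complex power (interpreted as 0 when ρ = 0). -/

import Mathlib

open MeasureTheory Set

/-- The normalization constant `C_α = 1/|Γ(-α)|` for the Marchaud fractional derivative. -/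
noncomputable def Calpha (α : ℝ) : ℝ := 1 / |Real.Gamma (-α)|

/-- The normalization constant `C_{n,s} = 4^s Γ(n/2+s)/(π^{n/2}|Γ(-s)|)` for the
fractional Laplacian. -/
noncomputable def Cns (n : ℕ) (s : ℝ) : ℝ :=
  (4 : ℝ) ^ s * Real.Gamma ((n : ℝ) / 2 + s) / (Real.pi ^ ((n : ℝ) / 2) * |Real.Gamma (-s)|)

/-- The right Marchaud fractional derivative of order `α` in the time variable, for a
complex-valued function: `D_right^α φ(x,t) = C_α ∫_t^∞ (φ(x,t) - φ(x,τ))/(τ-t)^{1+α} dτ`. -/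
noncomputable def marchaudRightC {n : ℕ} (α : ℝ) (φ : EuclideanSpace ℝ (Fin n) × ℝ → ℂ)
    (x : EuclideanSpace ℝ (Fin n)) (t : ℝ) : ℂ :=
  (Calpha α : ℂ) * ∫ τ in Ioi t, (φ (x, t) - φ (x, τ)) / (((τ - t) ^ (1 + α) : ℝ) : ℂ)

/-- The left Marchaud fractional derivative of order `α` in the time variable, for a
complex-valued function: `D_left^α φ(x,t) = C_α ∫_{-∞}^t (φ(x,t) - φ(x,τ))/(t-τ)^{1+α} dτ`. -/
noncomputable def marchaudLeftC {n : ℕ} (α : ℝ) (φ : EuclideanSpace ℝ (Fin n) × ℝ → ℂ)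
    (x : EuclideanSpace ℝ (Fin n)) (t : ℝ) : ℂ :=
  (Calpha α : ℂ) * ∫ τ in Iio t, (φ (x, t) - φ (x, τ)) / (((t - τ) ^ (1 + α) : ℝ) : ℂ)

/-- The fractional Laplacian `(-Δ)^s` acting in the space variable, for a complex-valued
function: `(-Δ)^s φ(x,t) = (C_{n,s}/2) ∫_{ℝⁿ} (2φ(x,t) - φ(x+y,t) - φ(x-y,t))/|y|^{n+2s} dy`. -/
noncomputable def fracLapC {n : ℕ} (s : ℝ) (φ : EuclideanSpace ℝ (Fin n) × ℝ → ℂ)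
    (x : EuclideanSpace ℝ (Fin n)) (t : ℝ) : ℂ :=
  ((Cns n s / 2 : ℝ) : ℂ) * ∫ y : EuclideanSpace ℝ (Fin n),
    (2 * φ (x, t) - φ (x + y, t) - φ (x - y, t)) / ((‖y‖ ^ ((n : ℝ) + 2 * s) : ℝ) : ℂ)

open RealInnerProductSpace in
/-- The Fourier transform
`𝓕f(ξ,ρ) = (2π)^{-(n+1)/2} ∫_ℝ ∫_{ℝⁿ} e^{-i(ξ·x + ρt)} f(x,t) dx dt`. -/
noncomputable def fourierTrans {n : ℕ} (f : EuclideanSpace ℝ (Fin n) × ℝ → ℂ)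
    (ξ : EuclideanSpace ℝ (Fin n)) (ρ : ℝ) : ℂ :=
  (((2 * Real.pi) ^ (-(((n : ℝ) + 1) / 2)) : ℝ) : ℂ) *
    ∫ p : EuclideanSpace ℝ (Fin n) × ℝ,
      Complex.exp (-Complex.I * ((⟪ξ, p.1⟫ : ℝ) + ρ * p.2)) * f p

section SchwartzDifferences

variable {E F : Type*} [NormedAddCommGroup E] [NormedSpace ℝ E]
  [NormedAddCommGroup F] [NormedSpace ℝ F]

lemma SchwartzMap.exists_norm_le_one_add_norm_rpow (f : SchwartzMap E F) (k : ℕ) :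
    ∃ C, 0 ≤ C ∧ ∀ x, ‖f x‖ ≤ C * (1 + ‖x‖) ^ (-(k : ℝ)) := by
  refine ⟨2 ^ k * (Finset.Iic (k, 0)).sup (fun m => SchwartzMap.seminorm ℝ m.1 m.2) f,
    by positivity, fun x => ?_⟩
  have h := SchwartzMap.one_add_le_sup_seminorm_apply (𝕜 := ℝ) (m := (k, 0)) (k := k) (n := 0)
    le_rfl le_rfl f x
  rw [norm_iteratedFDeriv_zero] at h
  rw [Real.rpow_neg (by positivity), Real.rpow_natCast, ← div_eq_mul_inv,
    le_div_iff₀ (by positivity), mul_comm]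
  exact h

lemma SchwartzMap.exists_norm_add_sub_le (f : SchwartzMap E F) (k : ℕ) :
    ∃ C, 0 ≤ C ∧ ∀ p h, ‖h‖ ≤ 1 → ‖f (p + h) - f p‖ ≤ C * (1 + ‖p‖) ^ (-(k : ℝ)) * ‖h‖ := by
  obtain ⟨C, hC, hb⟩ := (SchwartzMap.fderivCLM ℝ E F f).exists_norm_le_one_add_norm_rpow k
  refine ⟨C * 2 ^ (k : ℝ), by positivity, fun p h hh => ?_⟩
  have := (convex_closedBall p 1).norm_image_sub_le_of_norm_hasFDerivWithin_le (𝕜 := ℝ) (f := f)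
    (f' := fderiv ℝ f) (C := C * 2 ^ (k : ℝ) * (1 + ‖p‖) ^ (-(k : ℝ))) (x := p) (y := p + h)
    (fun x _ => f.differentiableAt.hasFDerivAt.hasFDerivWithinAt) ?_ (by simp) (by simpa using hh)
  · simpa using this
  intro x hx
  refine (hb x).trans ?_
  rw [mul_assoc]
  refine mul_le_mul_of_nonneg_left ?_ hC
  have h1 : (1 + ‖p‖) / 2 ≤ 1 + ‖x‖ := by
    have : ‖p‖ ≤ ‖x‖ + 1 := by
      calc ‖p‖ = ‖x - (x - p)‖ := by simp
        _ ≤ ‖x‖ + ‖x - p‖ := norm_sub_le _ _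
        _ ≤ ‖x‖ + 1 := by gcongr; simpa [dist_eq_norm] using hx
    linarith [norm_nonneg x]
  calc (1 + ‖x‖) ^ (-(k : ℝ)) ≤ ((1 + ‖p‖) / 2) ^ (-(k : ℝ)) :=
        Real.rpow_le_rpow_of_nonpos (by positivity) h1 (by simp)
    _ = _ := by
        rw [Real.div_rpow (by positivity) (by norm_num), Real.rpow_neg (by norm_num : (0 : ℝ) ≤ 2),
          div_inv_eq_mul, mul_comm]

lemma SchwartzMap.exists_norm_second_difference_le (f : SchwartzMap E F) (k : ℕ) :
    ∃ C, 0 ≤ C ∧ ∀ p h, ‖h‖ ≤ 1 →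
      ‖f (p + h) + f (p - h) - (f p + f p)‖ ≤ C * (1 + ‖p‖) ^ (-(k : ℝ)) * ‖h‖ ^ 2 := by
  obtain ⟨C, hC, hb⟩ := (SchwartzMap.fderivCLM ℝ E F f).exists_norm_add_sub_le k
  simp only [SchwartzMap.fderivCLM_apply] at hb
  refine ⟨2 * C, by positivity, fun p h hh => ?_⟩
  have hder (u : E) : HasFDerivAt (fun u => f (p + u) + f (p - u))
      (fderiv ℝ f (p + u) - fderiv ℝ f (p - u)) u := by
    have h1 : HasFDerivAt (fun u => f (p + u)) (fderiv ℝ f (p + u)) u := by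
      simpa using! (f.differentiableAt (x := p + u)).hasFDerivAt.comp u
        ((hasFDerivAt_id (𝕜 := ℝ) u).const_add p)
    have h2 : HasFDerivAt (fun u => f (p - u)) (-fderiv ℝ f (p - u)) u := by
      simpa using! (f.differentiableAt (x := p - u)).hasFDerivAt.comp u
        ((hasFDerivAt_id (𝕜 := ℝ) u).const_sub p)
    simpa [sub_eq_add_neg] using! h1.add h2
  have := (convex_closedBall (0 : E) ‖h‖).norm_image_sub_le_of_norm_hasFDerivWithin_le (𝕜 := ℝ)
    (C := 2 * C * (1 + ‖p‖) ^ (-(k : ℝ)) * ‖h‖) (x := 0) (y := h)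
    (fun u _ => (hder u).hasFDerivWithinAt) ?_ (by simp) (by simp)
  · simpa [pow_two, mul_assoc] using this
  intro u hu
  have hu' : ‖u‖ ≤ ‖h‖ := by simpa using hu
  have h1 := hb p u (hu'.trans hh)
  have h2 := hb p (-u) (by simpa using hu'.trans hh)
  rw [← sub_eq_add_neg, norm_neg] at h2
  calc _ = ‖(fderiv ℝ f (p + u) - fderiv ℝ f p) - (fderiv ℝ f (p - u) - fderiv ℝ f p)‖ := by
        simp
    _ ≤ _ := norm_sub_le _ _
    _ ≤ 2 * C * (1 + ‖p‖) ^ (-(k : ℝ)) * ‖u‖ := by linarith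
    _ ≤ _ := by gcongr

variable [FiniteDimensional ℝ E] [MeasurableSpace E] [BorelSpace E]
  (μ : Measure E) [μ.IsAddHaarMeasure]

lemma SchwartzMap.exists_integral_norm_sub_le (f : SchwartzMap E F) :
    ∃ C, ∀ h, ∫ p, ‖f p - f (p - h)‖ ∂μ ≤ C * min 1 (‖h‖ ^ 1) := by
  obtain ⟨C, hC, hb⟩ := f.exists_norm_add_sub_le (Module.finrank ℝ E + 1)
  have hg : Integrable (fun x : E ↦ (1 + ‖x‖) ^ (-((Module.finrank ℝ E + 1 : ℕ) : ℝ))) μ :=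
    integrable_one_add_norm (by simp)
  have hf : Integrable (fun p => ‖f p‖) μ := f.integrable.norm
  set G := ∫ x, (1 + ‖x‖) ^ (-((Module.finrank ℝ E + 1 : ℕ) : ℝ)) ∂μ with hG
  have hG0 : 0 ≤ G := by positivity
  have hf0 : 0 ≤ ∫ p, ‖f p‖ ∂μ := by positivity
  refine ⟨C * G + 2 * ∫ p, ‖f p‖ ∂μ, fun h => ?_⟩
  rcases le_total ‖h‖ 1 with hh | hh
  · rw [min_eq_right (by simpa using hh), pow_one]
    calc _ ≤ ∫ p, C * (1 + ‖p‖) ^ (-((Module.finrank ℝ E + 1 : ℕ) : ℝ)) * ‖h‖ ∂μ := by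
          refine integral_mono_of_nonneg (by filter_upwards; simp)
            ((hg.const_mul C).mul_const _) ?_
          filter_upwards with p
          have := hb p (-h) (by simpa using hh)
          rwa [norm_sub_rev, norm_neg, ← sub_eq_add_neg] at this
      _ = C * G * ‖h‖ := by rw [integral_mul_const, integral_const_mul]
      _ ≤ _ := by gcongr; linarith
  · rw [min_eq_left (by simpa using hh), mul_one]
    calc _ ≤ ∫ p, (‖f p‖ + ‖f (p - h)‖) ∂μ := by
          refine integral_mono_of_nonneg (by filter_upwards; simp)
            (hf.add (hf.comp_sub_right h)) ?_
          filter_upwards with p using norm_sub_le _ _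
      _ = 2 * ∫ p, ‖f p‖ ∂μ := by
          rw [integral_add hf (hf.comp_sub_right h),
            integral_sub_right_eq_self (fun p => ‖f p‖) h, two_mul]
      _ ≤ _ := by nlinarith

lemma SchwartzMap.exists_integral_norm_second_difference_le (f : SchwartzMap E F) :
    ∃ C, ∀ h, ∫ p, ‖f p + f p - f (p + h) - f (p - h)‖ ∂μ ≤ C * min 1 (‖h‖ ^ 2) := by
  obtain ⟨C, hC, hb⟩ := f.exists_norm_second_difference_le (Module.finrank ℝ E + 1)
  have hg : Integrable (fun x : E ↦ (1 + ‖x‖) ^ (-((Module.finrank ℝ E + 1 : ℕ) : ℝ))) μ :=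
    integrable_one_add_norm (by simp)
  have hf : Integrable (fun p => ‖f p‖) μ := f.integrable.norm
  set G := ∫ x, (1 + ‖x‖) ^ (-((Module.finrank ℝ E + 1 : ℕ) : ℝ)) ∂μ with hG
  have hG0 : 0 ≤ G := by positivity
  have hf0 : 0 ≤ ∫ p, ‖f p‖ ∂μ := by positivity
  refine ⟨C * G + 4 * ∫ p, ‖f p‖ ∂μ, fun h => ?_⟩
  rcases le_total ‖h‖ 1 with hh | hh
  · rw [min_eq_right (pow_le_one₀ (norm_nonneg _) hh)]
    calc _ ≤ ∫ p, C * (1 + ‖p‖) ^ (-((Module.finrank ℝ E + 1 : ℕ) : ℝ)) * ‖h‖ ^ 2 ∂μ := by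
          refine integral_mono_of_nonneg (by filter_upwards; simp)
            ((hg.const_mul C).mul_const _) ?_
          filter_upwards with p
          have := hb p h hh
          rwa [norm_sub_rev, ← sub_sub] at this
      _ = C * G * ‖h‖ ^ 2 := by rw [integral_mul_const, integral_const_mul]
      _ ≤ _ := by gcongr; linarith
  · rw [min_eq_left (one_le_pow₀ hh), mul_one]
    have h1 := hf.comp_sub_right h
    have h2 := hf.comp_add_right h
    have h3 : Integrable (fun p => ‖f p‖ + ‖f p‖) μ := hf.add hf
    have h4 : Integrable (fun p => ‖f p‖ + ‖f p‖ + ‖f (p + h)‖) μ := h3.add h2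
    calc _ ≤ ∫ p, (‖f p‖ + ‖f p‖ + ‖f (p + h)‖ + ‖f (p - h)‖) ∂μ := by
          refine integral_mono_of_nonneg (by filter_upwards; simp)
            (h4.add h1) ?_
          filter_upwards with p
          refine (norm_sub_le _ _).trans ?_
          gcongr
          refine (norm_sub_le _ _).trans ?_
          gcongr
          exact norm_add_le _ _
      _ = 4 * ∫ p, ‖f p‖ ∂μ := by
          rw [integral_add h4 h1, integral_add h3 h2,
            integral_add hf hf, integral_sub_right_eq_self (fun p => ‖f p‖) h,
            integral_add_right_eq_self (fun p => ‖f p‖) h]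
          ring
      _ ≤ _ := by nlinarith

end SchwartzDifferences

section MarchaudSymbol

open Filter Topology

lemma integrableOn_min_pow_mul_rpow {a : ℝ} {k : ℕ} (ha : 0 < a) (hk : a < k) :
    IntegrableOn (fun r : ℝ => min 1 (r ^ k) * r ^ (-1 - a)) (Ioi 0) := by
  rw [← Ioc_union_Ioi_eq_Ioi zero_le_one]
  refine IntegrableOn.union ?_ ?_
  · have h : IntegrableOn (fun r : ℝ => r ^ ((k : ℝ) - 1 - a)) (Ioc 0 1) := by
      rw [← intervalIntegrable_iff_integrableOn_Ioc_of_le zero_le_one]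
      exact intervalIntegral.intervalIntegrable_rpow' (by linarith)
    refine h.congr_fun (fun r hr => ?_) measurableSet_Ioc
    simp only
    rw [min_eq_right (pow_le_one₀ hr.1.le hr.2), ← Real.rpow_natCast, ← Real.rpow_add hr.1]
    congr 1; ring
  · have h : IntegrableOn (fun r : ℝ => r ^ (-1 - a)) (Ioi 1) :=
      integrableOn_Ioi_rpow_of_lt (by linarith) zero_lt_one
    refine h.congr_fun (fun r hr => ?_) measurableSet_Ioi
    simp only
    rw [min_eq_left (one_le_pow₀ (le_of_lt hr)), one_mul]

lemma norm_one_sub_cexp_neg_mul_le {z : ℂ} (hz : 0 ≤ z.re) {r : ℝ} (hr : 0 < r) :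
    ‖1 - Complex.exp (-z * r)‖ ≤ 2 * (1 + ‖z‖) * min 1 (r ^ 1) := by
  have h2 : ‖1 - Complex.exp (-z * r)‖ ≤ 2 := by
    refine (norm_sub_le _ _).trans ?_
    have : ‖Complex.exp (-z * r)‖ ≤ 1 := by
      rw [Complex.norm_exp]
      simp
      positivity
    simp only [norm_one]; linarith
  rw [pow_one]
  rcases le_total r 1 with h | h
  · rw [min_eq_right h]
    have hw : ‖-z * (r : ℂ)‖ = ‖z‖ * r := by simp [abs_of_pos hr]
    rcases le_total (‖z‖ * r) 1 with h1 | h1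
    · rw [norm_sub_rev]
      refine (Complex.norm_exp_sub_one_le (hw ▸ h1)).trans ?_
      rw [hw]; nlinarith
    · nlinarith
  · rw [min_eq_left h]
    nlinarith [norm_nonneg z]

lemma aestronglyMeasurable_one_sub_cexp_mul_rpow (z : ℂ) (a : ℝ) :
    AEStronglyMeasurable (fun r : ℝ => (1 - Complex.exp (-z * r)) * ((r ^ (-1 - a) : ℝ) : ℂ))
      (volume.restrict (Ioi 0)) := by
  apply Measurable.aestronglyMeasurable
  fun_prop

lemma norm_one_sub_cexp_mul_rpow_le {z : ℂ} (hz : 0 ≤ z.re) (a : ℝ) {r : ℝ} (hr : 0 < r) :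
    ‖(1 - Complex.exp (-z * r)) * ((r ^ (-1 - a) : ℝ) : ℂ)‖ ≤
      2 * (1 + ‖z‖) * (min 1 (r ^ 1) * r ^ (-1 - a)) := by
  have h0 : 0 < r ^ (-1 - a) := by positivity
  rw [norm_mul, Complex.norm_real, Real.norm_of_nonneg h0.le, ← mul_assoc]
  gcongr
  exact norm_one_sub_cexp_neg_mul_le hz hr

lemma integrableOn_one_sub_cexp_mul_rpow {a : ℝ} (ha0 : 0 < a) (ha1 : a < 1) {z : ℂ}
    (hz : 0 ≤ z.re) :
    IntegrableOn (fun r : ℝ => (1 - Complex.exp (-z * r)) * ((r ^ (-1 - a) : ℝ) : ℂ)) (Ioi 0) := by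
  refine Integrable.mono' ((integrableOn_min_pow_mul_rpow ha0 (k := 1) (by simpa)).const_mul
    (2 * (1 + ‖z‖))) (aestronglyMeasurable_one_sub_cexp_mul_rpow z a) ?_
  exact (ae_restrict_iff' measurableSet_Ioi).2 (.of_forall fun r hr =>
    norm_one_sub_cexp_mul_rpow_le hz a hr)

/-- The symbol integral `∫₀^∞ (1 - e^{-zr}) r^{-1-a} dr`. -/
noncomputable def marchaudSymbol (a : ℝ) (z : ℂ) : ℂ :=
  ∫ r in Ioi (0 : ℝ), (1 - Complex.exp (-z * r)) * ((r ^ (-1 - a) : ℝ) : ℂ)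

lemma continuousOn_marchaudSymbol {a : ℝ} (ha0 : 0 < a) (ha1 : a < 1) :
    ContinuousOn (marchaudSymbol a) {z | 0 ≤ z.re} := by
  intro z₀ hz₀
  refine tendsto_integral_filter_of_dominated_convergence
    (fun r => 2 * (2 + ‖z₀‖) * (min 1 (r ^ 1) * r ^ (-1 - a)))
    (.of_forall fun z => aestronglyMeasurable_one_sub_cexp_mul_rpow z a) ?_
    ((integrableOn_min_pow_mul_rpow ha0 (k := 1) (by simpa)).const_mul _) ?_
  · have hb : ∀ᶠ z in 𝓝[{z : ℂ | 0 ≤ z.re}] z₀, ‖z‖ < 1 + ‖z₀‖ :=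
      nhdsWithin_le_nhds (continuous_norm.tendsto z₀ |>.eventually_lt_const (by linarith))
    filter_upwards [hb, self_mem_nhdsWithin] with z hz hz'
    refine (ae_restrict_iff' measurableSet_Ioi).2 (.of_forall fun r (hr : 0 < r) => ?_)
    refine (norm_one_sub_cexp_mul_rpow_le hz' a hr).trans ?_
    have : 0 ≤ min 1 (r ^ 1) * r ^ (-1 - a) := by positivity
    exact mul_le_mul_of_nonneg_right (by linarith) this
  · refine .of_forall fun r => ?_
    have : Continuous fun z : ℂ => (1 - Complex.exp (-z * r)) * ((r ^ (-1 - a) : ℝ) : ℂ) := by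
      fun_prop
    exact (this.tendsto z₀).mono_left nhdsWithin_le_nhds

lemma hasDerivAt_marchaudSymbol {a : ℝ} (ha0 : 0 < a) (ha1 : a < 1) {z : ℂ} (hz : 0 < z.re) :
    HasDerivAt (marchaudSymbol a)
      (∫ r in Ioi (0 : ℝ), ((r ^ (-a) : ℝ) : ℂ) * Complex.exp (-z * r)) z := by
  have hs : {w : ℂ | z.re / 2 < w.re} ∈ 𝓝 z :=
    (isOpen_lt continuous_const Complex.continuous_re).mem_nhds (by simp; linarith)
  have hbound : IntegrableOn (fun r : ℝ => r ^ ((1 - a) - 1) * Real.exp (-(z.re / 2 * r)))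
      (Ioi 0) := by
    have key := Real.integral_rpow_mul_exp_neg_mul_Ioi (a := 1 - a) (r := z.re / 2)
      (by linarith) (by linarith)
    have : 0 < 1 - a := by linarith
    exact .of_integral_ne_zero (by rw [key]; positivity)
  refine (hasDerivAt_integral_of_dominated_loc_of_deriv_le hs
    (.of_forall fun z => aestronglyMeasurable_one_sub_cexp_mul_rpow z a)
    (integrableOn_one_sub_cexp_mul_rpow ha0 ha1 hz.le)
    (F' := fun z r => ((r ^ (-a) : ℝ) : ℂ) * Complex.exp (-z * r)) ?_ ?_ hbound ?_).2
  · apply Measurable.aestronglyMeasurable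
    fun_prop
  · refine (ae_restrict_iff' measurableSet_Ioi).2 (.of_forall fun r (hr : 0 < r) w hw => ?_)
    have h0 : 0 < r ^ (-a) := by positivity
    rw [norm_mul, Complex.norm_real, Real.norm_of_nonneg h0.le, Complex.norm_exp]
    have : 1 - a - 1 = -a := by ring
    rw [this]
    gcongr
    rw [← neg_mul, Complex.re_mul_ofReal, Complex.neg_re]
    have hw' : z.re / 2 < w.re := hw
    gcongr
  · refine (ae_restrict_iff' measurableSet_Ioi).2 (.of_forall fun r (hr : 0 < r) w hw => ?_)
    have h1 : HasDerivAt (fun z : ℂ => -z * (r : ℂ)) (-r) w := by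
      simpa using ((hasDerivAt_id w).neg.mul_const (r : ℂ))
    have h2 := ((h1.cexp.const_sub 1).mul_const (((r ^ (-1 - a) : ℝ) : ℂ)))
    refine h2.congr_deriv ?_
    have : r ^ (-a) = r * r ^ (-1 - a) := by
      nth_rewrite 2 [← Real.rpow_one r]
      rw [← Real.rpow_add hr]
      congr 1; ring
    rw [this]
    push_cast
    ring

lemma marchaudSymbol_ofReal {a : ℝ} (ha0 : 0 < a) (ha1 : a < 1) {x : ℝ} (hx : 0 < x) :
    marchaudSymbol a x = (Real.Gamma (1 - a) / a : ℝ) * (x : ℂ) ^ (a : ℂ) := by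
  have haC : (a : ℂ) ≠ 0 := by exact_mod_cast ha0.ne'
  set H : ℝ → ℂ := fun x => marchaudSymbol a x - (Real.Gamma (1 - a) / a : ℝ) * (x : ℂ) ^ (a : ℂ)
    with hH
  have hder (y : ℝ) (hy : 0 < y) : HasDerivAt H 0 y := by
    have h1 := hasDerivAt_marchaudSymbol ha0 ha1 (z := (y : ℂ)) (by simpa using hy)
    have h2 := ((hasDerivAt_id (y : ℂ)).cpow_const (c := (a : ℂ)) (by simp [hy])).const_mul
      ((Real.Gamma (1 - a) / a : ℝ) : ℂ)
    have h3 := (h1.sub h2).comp_ofReal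
    refine HasDerivAt.congr_deriv (f := H) h3 ?_
    rw [sub_eq_zero]
    have key := Complex.integral_cpow_mul_exp_neg_mul_Ioi (a := ((1 - a : ℝ) : ℂ)) (r := y)
      (by simpa using ha1) hy
    have e : ∫ r in Ioi (0 : ℝ), ((r ^ (-a) : ℝ) : ℂ) * Complex.exp (-(y : ℂ) * r) =
        ∫ r in Ioi (0 : ℝ), (r : ℂ) ^ (((1 - a : ℝ) : ℂ) - 1) * Complex.exp (-(y * r)) := by
      refine setIntegral_congr_fun measurableSet_Ioi (fun r (hr : 0 < r) => ?_)
      rw [Complex.ofReal_cpow hr.le]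
      congr 2
      · push_cast; ring
      · ring
    rw [e, key, Complex.Gamma_ofReal, one_div, ← Complex.ofReal_inv,
      ← Complex.ofReal_cpow (by positivity), Real.inv_rpow hy.le, ← Real.rpow_neg hy.le]
    simp only [id, mul_one]
    have : ((y : ℂ) ^ ((a : ℂ) - 1)) = ((y ^ (-(1 - a)) : ℝ) : ℂ) := by
      rw [Complex.ofReal_cpow hy.le]; congr 1; push_cast; ring
    rw [this]
    push_cast
    field_simp
  have hconst (y : ℝ) (hy : 0 < y) : H y = H x :=
    isOpen_Ioi.is_const_of_deriv_eq_zero (𝕜 := ℝ) isPreconnected_Ioi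
      (fun y hy => (hder y hy).differentiableAt.differentiableWithinAt)
      (fun y hy => (hder y hy).deriv) hy hx
  have hlim : Tendsto H (𝓝[>] 0) (𝓝 0) := by
    have h1 : Tendsto (fun y : ℝ => marchaudSymbol a y) (𝓝[>] 0) (𝓝 (marchaudSymbol a 0)) := by
      refine ((continuousOn_marchaudSymbol ha0 ha1) 0 (by simp)).tendsto.comp ?_
      refine tendsto_nhdsWithin_of_tendsto_nhds_of_eventually_within _ ?_ ?_
      · exact (Complex.continuous_ofReal.tendsto' 0 0 (by simp)).mono_left nhdsWithin_le_nhds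
      · filter_upwards [self_mem_nhdsWithin] with y hy
        simpa using le_of_lt hy
    have h2 : Tendsto (fun y : ℝ => (y : ℂ) ^ (a : ℂ)) (𝓝[>] 0) (𝓝 0) := by
      have : Continuous fun y : ℝ => (y : ℂ) ^ (a : ℂ) :=
        Complex.continuous_ofReal_cpow_const (by simpa using ha0)
      exact (this.tendsto' 0 0 (by simp [haC])).mono_left nhdsWithin_le_nhds
    have h0 : marchaudSymbol a 0 = 0 := by simp [marchaudSymbol]
    have h3 := h1.sub (h2.const_mul ((Real.Gamma (1 - a) / a : ℝ) : ℂ))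
    rwa [h0, mul_zero, sub_zero] at h3
  have : Tendsto H (𝓝[>] 0) (𝓝 (H x)) := by
    refine tendsto_const_nhds.congr' ?_
    filter_upwards [self_mem_nhdsWithin] with y hy using (hconst y hy).symm
  exact sub_eq_zero.1 (tendsto_nhds_unique this hlim)

lemma marchaudSymbol_of_re_pos {a : ℝ} (ha0 : 0 < a) (ha1 : a < 1) {z : ℂ} (hz : 0 < z.re) :
    marchaudSymbol a z = (Real.Gamma (1 - a) / a : ℝ) * z ^ (a : ℂ) := by
  have hU : IsOpen {z : ℂ | 0 < z.re} := isOpen_lt continuous_const Complex.continuous_re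
  have h1 : AnalyticOnNhd ℂ (marchaudSymbol a) {z : ℂ | 0 < z.re} :=
    DifferentiableOn.analyticOnNhd (fun w hw =>
      (hasDerivAt_marchaudSymbol ha0 ha1 hw).differentiableAt.differentiableWithinAt) hU
  have h2 : AnalyticOnNhd ℂ (fun z => ((Real.Gamma (1 - a) / a : ℝ) : ℂ) * z ^ (a : ℂ))
      {z : ℂ | 0 < z.re} := by
    refine DifferentiableOn.analyticOnNhd (fun w hw => ?_) hU
    exact ((differentiableAt_id.cpow_const (Or.inl hw)).const_mul _).differentiableWithinAt
  have hconn : IsPreconnected {z : ℂ | 0 < z.re} :=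
    (convex_halfSpace_re_gt 0).isPreconnected
  refine h1.eqOn_of_preconnected_of_frequently_eq h2 hconn (z₀ := 1) (by simp) ?_ hz
  have ht : Tendsto (fun y : ℝ => (y : ℂ)) (𝓝[≠] 1) (𝓝[≠] 1) := by
    refine tendsto_nhdsWithin_of_tendsto_nhds_of_eventually_within _ ?_ ?_
    · exact (Complex.continuous_ofReal.tendsto' 1 1 (by simp)).mono_left nhdsWithin_le_nhds
    · filter_upwards [self_mem_nhdsWithin] with y hy
      simpa using hy
  refine ht.frequently (Eventually.frequently ?_)
  filter_upwards [nhdsWithin_le_nhds (Ioi_mem_nhds zero_lt_one)] with y hy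
  exact marchaudSymbol_ofReal ha0 ha1 hy

lemma marchaudSymbol_eq {a : ℝ} (ha0 : 0 < a) (ha1 : a < 1) {z : ℂ} (hz : 0 ≤ z.re) :
    marchaudSymbol a z = (Real.Gamma (1 - a) / a : ℝ) * z ^ (a : ℂ) := by
  have haC : (a : ℂ) ≠ 0 := by exact_mod_cast ha0.ne'
  rcases eq_or_ne z 0 with rfl | hz0
  · simp [marchaudSymbol, haC]
  have hslit : z ∈ Complex.slitPlane := by
    rcases hz.lt_or_eq with h | h
    · exact Or.inl h
    · exact Or.inr fun h' => hz0 (Complex.ext h.symm h')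
  have hpath : Tendsto (fun ε : ℝ => z + ε) (𝓝[>] 0) (𝓝 z) :=
    ((by fun_prop : Continuous fun ε : ℝ => z + ε).tendsto' 0 z (by simp)).mono_left
      nhdsWithin_le_nhds
  have h1 : Tendsto (fun ε : ℝ => marchaudSymbol a (z + ε)) (𝓝[>] 0) (𝓝 (marchaudSymbol a z)) := by
    refine ((continuousOn_marchaudSymbol ha0 ha1) z hz).tendsto.comp ?_
    refine tendsto_nhdsWithin_of_tendsto_nhds_of_eventually_within _ hpath ?_
    filter_upwards [self_mem_nhdsWithin] with ε (hε : 0 < ε)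
    simp only [Complex.add_re, Complex.ofReal_re]; linarith
  have h2 : Tendsto (fun ε : ℝ => ((Real.Gamma (1 - a) / a : ℝ) : ℂ) * (z + ε) ^ (a : ℂ)) (𝓝[>] 0)
      (𝓝 (((Real.Gamma (1 - a) / a : ℝ) : ℂ) * z ^ (a : ℂ))) :=
    (hpath.cpow tendsto_const_nhds hslit).const_mul _
  refine tendsto_nhds_unique h1 (h2.congr' ?_)
  filter_upwards [self_mem_nhdsWithin] with ε (hε : 0 < ε)
  refine (marchaudSymbol_of_re_pos ha0 ha1 ?_).symm
  simp only [Complex.add_re, Complex.ofReal_re]; linarith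

lemma abs_Gamma_neg {a : ℝ} (ha0 : 0 < a) (ha1 : a < 1) :
    |Real.Gamma (-a)| = Real.Gamma (1 - a) / a := by
  have h := Real.Gamma_add_one (s := -a) (by linarith)
  have hpos : 0 < Real.Gamma (1 - a) := Real.Gamma_pos_of_pos (by linarith)
  rw [show -a + 1 = 1 - a by ring] at h
  have : Real.Gamma (-a) = -(Real.Gamma (1 - a) / a) := by rw [h]; field_simp
  rw [this, abs_neg, abs_of_pos (by positivity)]

end MarchaudSymbol

section FracLapSymbol

lemma integrable_min_norm_sq_mul_rpow {n : ℕ} (hn : 1 ≤ n) {s : ℝ} (hs0 : 0 < s) (hs1 : s < 1) :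
    Integrable (fun y : EuclideanSpace ℝ (Fin n) =>
      min 1 (‖y‖ ^ 2) * (‖y‖ ^ ((n : ℝ) + 2 * s))⁻¹) := by
  have : Nonempty (Fin n) := ⟨⟨0, hn⟩⟩
  rw [integrable_fun_norm_addHaar (volume : Measure (EuclideanSpace ℝ (Fin n)))
    (f := fun r : ℝ => min 1 (r ^ 2) * (r ^ ((n : ℝ) + 2 * s))⁻¹)]
  refine (integrableOn_min_pow_mul_rpow (a := 2 * s) (k := 2) (by linarith)
    (by push_cast; linarith)).congr_fun (fun r (hr : 0 < r) => ?_) measurableSet_Ioi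
  simp only [finrank_euclideanSpace, Fintype.card_fin, smul_eq_mul]
  rw [mul_left_comm]
  congr 1
  rw [← Real.rpow_neg hr.le, ← Real.rpow_natCast, ← Real.rpow_add hr]
  congr 1
  push_cast [hn]
  ring

open RealInnerProductSpace

/-- The multiplier of the symmetric second difference with step `y`. -/
noncomputable def secondDifferenceSymbol {n : ℕ} (ξ y : EuclideanSpace ℝ (Fin n)) : ℂ :=
  2 - Complex.exp (Complex.I * (⟪ξ, y⟫ : ℝ)) - Complex.exp (-Complex.I * (⟪ξ, y⟫ : ℝ))

variable {n : ℕ} (ξ : EuclideanSpace ℝ (Fin n))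

lemma secondDifferenceSymbol_eq (y : EuclideanSpace ℝ (Fin n)) :
    secondDifferenceSymbol ξ y = ((2 - 2 * Real.cos ⟪ξ, y⟫ : ℝ) : ℂ) := by
  have h := Complex.two_cos (⟪ξ, y⟫ : ℝ)
  rw [secondDifferenceSymbol]
  push_cast
  rw [h, sub_sub, mul_comm Complex.I, neg_mul_comm, mul_comm Complex.I, neg_mul_comm]

lemma continuous_secondDifferenceSymbol : Continuous (secondDifferenceSymbol ξ) := by
  unfold secondDifferenceSymbol
  fun_prop

lemma norm_secondDifferenceSymbol_le (y : EuclideanSpace ℝ (Fin n)) :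
    ‖secondDifferenceSymbol ξ y‖ ≤ (4 + ‖ξ‖ ^ 2) * min 1 (‖y‖ ^ 2) := by
  have h0 := Real.cos_le_one ⟪ξ, y⟫
  have h1 := Real.neg_one_le_cos ⟪ξ, y⟫
  have h2 := Real.one_sub_sq_div_two_le_cos (x := ⟪ξ, y⟫)
  rw [secondDifferenceSymbol_eq, Complex.norm_real, Real.norm_of_nonneg (by linarith)]
  rcases le_total 1 (‖y‖ ^ 2) with h | h
  · rw [min_eq_left h]
    nlinarith [norm_nonneg ξ]
  · rw [min_eq_right h]
    have h3 : ⟪ξ, y⟫ ^ 2 ≤ ‖ξ‖ ^ 2 * ‖y‖ ^ 2 := by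
      rw [← mul_pow, sq_le_sq, abs_of_nonneg (a := ‖ξ‖ * ‖y‖) (by positivity)]
      exact abs_real_inner_le_norm ξ y
    nlinarith [sq_nonneg ‖y‖]

lemma integrable_secondDifferenceSymbol_div (hn : 1 ≤ n) {s : ℝ} (hs0 : 0 < s) (hs1 : s < 1) :
    Integrable (fun y : EuclideanSpace ℝ (Fin n) =>
      secondDifferenceSymbol ξ y / ((‖y‖ ^ ((n : ℝ) + 2 * s) : ℝ) : ℂ)) := by
  refine ((integrable_min_norm_sq_mul_rpow hn hs0 hs1).const_mul (4 + ‖ξ‖ ^ 2)).mono' ?_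
    (.of_forall fun y => ?_)
  · have := (continuous_secondDifferenceSymbol ξ).measurable
    apply Measurable.aestronglyMeasurable
    fun_prop
  · rw [norm_div, Complex.norm_real, Real.norm_of_nonneg (by positivity), div_eq_mul_inv,
      ← mul_assoc]
    gcongr
    exact norm_secondDifferenceSymbol_le ξ y

lemma integral_secondDifferenceSymbol_mul_gaussian {b : ℝ} (hb : 0 < b) :
    ∫ y : EuclideanSpace ℝ (Fin n),
      secondDifferenceSymbol ξ y * ((Real.exp (-(‖y‖ ^ 2 * b)) : ℝ) : ℂ) =
      ((Real.pi / b) ^ ((n : ℝ) / 2) : ℝ) *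
        (2 * (1 - Complex.exp (-((‖ξ‖ ^ 2 / 4 : ℝ) : ℂ) * (b⁻¹ : ℝ)))) := by
  have hb' : 0 < (b : ℂ).re := by simpa using hb
  have hI (c : ℂ) := GaussianFourier.integrable_cexp_neg_mul_sq_norm_add hb' c ξ
  have hV (c : ℂ) := GaussianFourier.integral_cexp_neg_mul_sq_norm_add hb' c ξ
  have e (y : EuclideanSpace ℝ (Fin n)) :
      secondDifferenceSymbol ξ y * ((Real.exp (-(‖y‖ ^ 2 * b)) : ℝ) : ℂ) =
      2 * Complex.exp (-b * ‖y‖ ^ 2 + 0 * (⟪ξ, y⟫ : ℝ)) -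
        Complex.exp (-b * ‖y‖ ^ 2 + Complex.I * (⟪ξ, y⟫ : ℝ)) -
        Complex.exp (-b * ‖y‖ ^ 2 + -Complex.I * (⟪ξ, y⟫ : ℝ)) := by
    rw [secondDifferenceSymbol, Complex.exp_add, Complex.exp_add, Complex.exp_add]
    push_cast
    rw [zero_mul, Complex.exp_zero, show -((‖y‖ : ℂ) ^ 2 * b) = -b * ‖y‖ ^ 2 by ring]
    ring
  have hI2 : Integrable fun y : EuclideanSpace ℝ (Fin n) =>
      2 * Complex.exp (-b * ‖y‖ ^ 2 + 0 * (⟪ξ, y⟫ : ℝ)) -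
        Complex.exp (-b * ‖y‖ ^ 2 + Complex.I * (⟪ξ, y⟫ : ℝ)) :=
    ((hI 0).const_mul 2).sub (hI Complex.I)
  simp_rw [e]
  rw [integral_sub hI2 (hI (-Complex.I)),
    integral_sub ((hI 0).const_mul 2) (hI Complex.I), integral_const_mul, hV, hV, hV,
    finrank_euclideanSpace, Fintype.card_fin, Complex.ofReal_cpow (by positivity)]
  have hbC : (b : ℂ) ≠ 0 := by exact_mod_cast hb.ne'
  have h1 : Complex.I ^ 2 * (‖ξ‖ : ℂ) ^ 2 / (4 * b) =
      -((‖ξ‖ ^ 2 / 4 : ℝ) : ℂ) * (b⁻¹ : ℝ) := by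
    rw [Complex.I_sq]; push_cast; field_simp
  rw [neg_sq, h1]
  push_cast
  simp
  ring

lemma integral_rpow_mul_exp_neg_norm_sq {s : ℝ} (hs0 : 0 < s)
    {y : EuclideanSpace ℝ (Fin n)} (hy : y ≠ 0) :
    ∫ r in Ioi (0 : ℝ), r ^ ((n : ℝ) / 2 + s - 1) * Real.exp (-(‖y‖ ^ 2 * r)) =
      (‖y‖ ^ ((n : ℝ) + 2 * s))⁻¹ * Real.Gamma ((n : ℝ) / 2 + s) := by
  have hy' : 0 < ‖y‖ := norm_pos_iff.2 hy
  rw [Real.integral_rpow_mul_exp_neg_mul_Ioi (by positivity) (by positivity), one_div,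
    Real.inv_rpow (by positivity), ← Real.rpow_natCast, ← Real.rpow_mul hy'.le]
  congr 3
  push_cast; ring

lemma integrable_secondDifferenceSymbol_mul_rpow_mul_exp (hn : 1 ≤ n) {s : ℝ} (hs0 : 0 < s)
    (hs1 : s < 1) :
    Integrable (fun q : EuclideanSpace ℝ (Fin n) × ℝ => secondDifferenceSymbol ξ q.1 *
      ((q.2 ^ ((n : ℝ) / 2 + s - 1) * Real.exp (-(‖q.1‖ ^ 2 * q.2)) : ℝ) : ℂ))
      (volume.prod (volume.restrict (Ioi 0))) := by
  have hm := (continuous_secondDifferenceSymbol ξ).measurable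
  rw [integrable_prod_iff (by apply Measurable.aestronglyMeasurable; fun_prop)]
  have hsym0 : secondDifferenceSymbol ξ 0 = 0 := by simp [secondDifferenceSymbol_eq]
  constructor
  · refine .of_forall fun y => ?_
    rcases eq_or_ne y 0 with rfl | hy
    · simp [hsym0]
    · have hy' : 0 < ‖y‖ := norm_pos_iff.2 hy
      have hΓ : 0 < Real.Gamma ((n : ℝ) / 2 + s) := Real.Gamma_pos_of_pos (by positivity)
      have hr : IntegrableOn (fun r : ℝ => r ^ ((n : ℝ) / 2 + s - 1) *
          Real.exp (-(‖y‖ ^ 2 * r))) (Ioi 0) := .of_integral_ne_zero (by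
        rw [integral_rpow_mul_exp_neg_norm_sq hs0 hy]
        positivity)
      exact (Integrable.ofReal (𝕜 := ℂ) hr).const_mul (secondDifferenceSymbol ξ y)
  · refine ((integrable_secondDifferenceSymbol_div ξ hn hs0 hs1).norm.mul_const
      (Real.Gamma ((n : ℝ) / 2 + s))).congr (.of_forall fun y => ?_)
    simp only
    rcases eq_or_ne y 0 with rfl | hy
    · simp [hsym0]
    · have : ∫ r in Ioi (0 : ℝ), ‖secondDifferenceSymbol ξ y *
          ((r ^ ((n : ℝ) / 2 + s - 1) * Real.exp (-(‖y‖ ^ 2 * r)) : ℝ) : ℂ)‖ =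
          ∫ r in Ioi (0 : ℝ), ‖secondDifferenceSymbol ξ y‖ *
            (r ^ ((n : ℝ) / 2 + s - 1) * Real.exp (-(‖y‖ ^ 2 * r))) := by
        refine setIntegral_congr_fun measurableSet_Ioi fun r (hr : 0 < r) => ?_
        rw [norm_mul, Complex.norm_real, Real.norm_of_nonneg (by positivity)]
      rw [this, integral_const_mul, integral_rpow_mul_exp_neg_norm_sq hs0 hy, norm_div,
        Complex.norm_real, Real.norm_of_nonneg (by positivity), div_eq_mul_inv, mul_assoc]

lemma integral_rpow_mul_one_sub_cexp_inv {s : ℝ} (c : ℂ) :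
    ∫ r in Ioi (0 : ℝ), ((r ^ (s - 1) : ℝ) : ℂ) * (1 - Complex.exp (-c * (r⁻¹ : ℝ))) =
      marchaudSymbol s c := by
  rw [← integral_comp_rpow_Ioi _ (p := -1) (by norm_num), marchaudSymbol]
  refine setIntegral_congr_fun measurableSet_Ioi fun r (hr : 0 < r) => ?_
  simp only [abs_neg, abs_one, one_mul, Real.rpow_neg_one, inv_inv, Complex.real_smul]
  rw [mul_comm (1 - _), ← mul_assoc, ← Complex.ofReal_mul]
  congr 2
  rw [Real.inv_rpow hr.le, ← Real.rpow_neg hr.le, ← Real.rpow_add hr]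
  congr 1; ring

lemma integral_secondDifferenceSymbol_div (hn : 1 ≤ n) {s : ℝ} (hs0 : 0 < s) (hs1 : s < 1) :
    ((Real.Gamma ((n : ℝ) / 2 + s) : ℝ) : ℂ) * ∫ y : EuclideanSpace ℝ (Fin n),
      secondDifferenceSymbol ξ y / ((‖y‖ ^ ((n : ℝ) + 2 * s) : ℝ) : ℂ) =
      2 * (Real.pi ^ ((n : ℝ) / 2) : ℝ) * marchaudSymbol s ((‖ξ‖ ^ 2 / 4 : ℝ) : ℂ) := by
  have hsym0 : secondDifferenceSymbol ξ 0 = 0 := by simp [secondDifferenceSymbol_eq]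
  have hleft : ((Real.Gamma ((n : ℝ) / 2 + s) : ℝ) : ℂ) * ∫ y : EuclideanSpace ℝ (Fin n),
      secondDifferenceSymbol ξ y / ((‖y‖ ^ ((n : ℝ) + 2 * s) : ℝ) : ℂ) =
      ∫ y : EuclideanSpace ℝ (Fin n), ∫ r in Ioi (0 : ℝ), secondDifferenceSymbol ξ y *
        ((r ^ ((n : ℝ) / 2 + s - 1) * Real.exp (-(‖y‖ ^ 2 * r)) : ℝ) : ℂ) := by
    rw [← integral_const_mul]
    congr 1 with y
    rw [integral_const_mul, integral_complex_ofReal]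
    rcases eq_or_ne y 0 with rfl | hy
    · simp [hsym0]
    · rw [integral_rpow_mul_exp_neg_norm_sq hs0 hy]
      push_cast
      ring
  rw [hleft,
    integral_integral_swap (integrable_secondDifferenceSymbol_mul_rpow_mul_exp ξ hn hs0 hs1),
    ← integral_rpow_mul_one_sub_cexp_inv, ← integral_const_mul]
  refine setIntegral_congr_fun measurableSet_Ioi fun r (hr : 0 < r) => ?_
  have e : ∀ y : EuclideanSpace ℝ (Fin n), secondDifferenceSymbol ξ y *
      ((r ^ ((n : ℝ) / 2 + s - 1) * Real.exp (-(‖y‖ ^ 2 * r)) : ℝ) : ℂ) =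
      ((r ^ ((n : ℝ) / 2 + s - 1) : ℝ) : ℂ) *
        (secondDifferenceSymbol ξ y * ((Real.exp (-(‖y‖ ^ 2 * r)) : ℝ) : ℂ)) := by
    intro y; push_cast; ring
  simp_rw [e]
  rw [integral_const_mul, integral_secondDifferenceSymbol_mul_gaussian ξ hr]
  have hr2 : r ^ ((n : ℝ) / 2 + s - 1) * (Real.pi / r) ^ ((n : ℝ) / 2) =
      Real.pi ^ ((n : ℝ) / 2) * r ^ (s - 1) := by
    rw [Real.div_rpow Real.pi_pos.le hr.le, show (n : ℝ) / 2 + s - 1 = n / 2 + (s - 1) by ring,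
      Real.rpow_add hr]
    have : r ^ ((n : ℝ) / 2) ≠ 0 := by positivity
    field_simp
  rw [← mul_assoc, ← Complex.ofReal_mul, hr2]
  push_cast
  ring

end FracLapSymbol

section Fubini

lemma integrable_prod_of_integral_norm_le {X Y : Type*} [MeasurableSpace X] [MeasurableSpace Y]
    {μ : Measure X} {ν : Measure Y} [SFinite μ] [SFinite ν] {D : X × Y → ℂ}
    (hD : AEStronglyMeasurable D (μ.prod ν)) {b : Y → ℝ} (hb : Integrable b ν)
    (hi : ∀ᵐ y ∂ν, Integrable (fun x => D (x, y)) μ)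
    (hle : ∀ᵐ y ∂ν, ∫ x, ‖D (x, y)‖ ∂μ ≤ b y) : Integrable D (μ.prod ν) := by
  rw [integrable_prod_iff' hD]
  refine ⟨hi, hb.mono' hD.norm.prod_swap.integral_prod_right' ?_⟩
  filter_upwards [hle] with y hy
  rwa [Real.norm_of_nonneg (by positivity)]

instance {n : ℕ} : (volume : Measure (EuclideanSpace ℝ (Fin n) × ℝ)).IsAddHaarMeasure :=
  inferInstanceAs (Measure.IsAddHaarMeasure (volume.prod volume))

open RealInnerProductSpace

variable {n : ℕ} (ξ : EuclideanSpace ℝ (Fin n)) (ρ : ℝ)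

/-- The character `(x, t) ↦ e^{-i(ξ·x + ρt)}`. -/
noncomputable def spaceTimeChar (p : EuclideanSpace ℝ (Fin n) × ℝ) : ℂ :=
  Complex.exp (-Complex.I * ((⟪ξ, p.1⟫ : ℝ) + ρ * p.2))

lemma fourierTrans_eq (f : EuclideanSpace ℝ (Fin n) × ℝ → ℂ) :
    fourierTrans f ξ ρ = (((2 * Real.pi) ^ (-(((n : ℝ) + 1) / 2)) : ℝ) : ℂ) *
      ∫ p, spaceTimeChar ξ ρ p * f p := rfl

lemma continuous_spaceTimeChar : Continuous (spaceTimeChar ξ ρ) := by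
  unfold spaceTimeChar
  fun_prop

lemma norm_spaceTimeChar (p : EuclideanSpace ℝ (Fin n) × ℝ) : ‖spaceTimeChar ξ ρ p‖ = 1 := by
  rw [spaceTimeChar, Complex.norm_exp]
  simp

lemma spaceTimeChar_add (p q : EuclideanSpace ℝ (Fin n) × ℝ) :
    spaceTimeChar ξ ρ (p + q) = spaceTimeChar ξ ρ p * spaceTimeChar ξ ρ q := by
  simp only [spaceTimeChar, ← Complex.exp_add, Prod.fst_add, Prod.snd_add, inner_add_right]
  congr 1
  push_cast
  ring

lemma integral_spaceTimeChar_mul_comp_add (f : EuclideanSpace ℝ (Fin n) × ℝ → ℂ)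
    (h : EuclideanSpace ℝ (Fin n) × ℝ) :
    ∫ p, spaceTimeChar ξ ρ p * f (p + h) =
      spaceTimeChar ξ ρ (-h) * ∫ p, spaceTimeChar ξ ρ p * f p := by
  rw [← integral_const_mul, ← integral_add_right_eq_self (μ := volume)
    (fun p => spaceTimeChar ξ ρ (-h) * (spaceTimeChar ξ ρ p * f p)) h]
  congr 1 with p
  rw [← mul_assoc, ← spaceTimeChar_add]
  congr 2
  abel

lemma integrable_spaceTimeChar_mul {f : EuclideanSpace ℝ (Fin n) × ℝ → ℂ} (hf : Integrable f) :
    Integrable fun p => spaceTimeChar ξ ρ p * f p :=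
  hf.bdd_mul (c := 1) (continuous_spaceTimeChar ξ ρ).aestronglyMeasurable
    (.of_forall fun p => (norm_spaceTimeChar ξ ρ p).le)

lemma integral_spaceTimeChar_mul_integral {Y : Type*} [MeasurableSpace Y] {ν : Measure Y}
    [SFinite ν] {D : (EuclideanSpace ℝ (Fin n) × ℝ) × Y → ℂ}
    (hD : Integrable D (volume.prod ν)) :
    ∫ p, spaceTimeChar ξ ρ p * ∫ y, D (p, y) ∂ν =
      ∫ y, (∫ p, spaceTimeChar ξ ρ p * D (p, y)) ∂ν := by
  simp_rw [← integral_const_mul]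
  refine integral_integral_swap (f := fun p y => spaceTimeChar ξ ρ p * D (p, y)) ?_
  exact hD.bdd_mul (c := 1)
    ((continuous_spaceTimeChar ξ ρ).measurable.comp measurable_fst).aestronglyMeasurable
    (.of_forall fun p => (norm_spaceTimeChar ξ ρ p.1).le)

end Fubini

section Marchaud

variable {n : ℕ} (φ : SchwartzMap (EuclideanSpace ℝ (Fin n) × ℝ) ℂ)

lemma marchaudLeftC_eq {n : ℕ} (α : ℝ) (φ : EuclideanSpace ℝ (Fin n) × ℝ → ℂ)
    (p : EuclideanSpace ℝ (Fin n) × ℝ) :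
    marchaudLeftC α φ p.1 p.2 = (Calpha α : ℂ) *
      ∫ r in Ioi (0 : ℝ), (φ p - φ (p - (0, r))) * ((r ^ (-1 - α) : ℝ) : ℂ) := by
  obtain ⟨x, t⟩ := p
  rw [marchaudLeftC]
  congr 1
  have h := ((volume : Measure ℝ).measurePreserving_sub_left t).setIntegral_preimage_emb
    (Homeomorph.subLeft t).measurableEmbedding
    (fun r => (φ (x, t) - φ (x, t - r)) / ((r ^ (1 + α) : ℝ) : ℂ)) (Ioi 0)
  have hpre : (fun r => t - r) ⁻¹' Ioi 0 = Iio t := by ext; simp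
  rw [hpre] at h
  simp only [sub_sub_cancel] at h
  rw [h]
  refine setIntegral_congr_fun measurableSet_Ioi fun r (hr : 0 < r) => ?_
  simp only [Prod.mk_sub_mk, sub_zero]
  rw [show -1 - α = -(1 + α) by ring, Real.rpow_neg hr.le, Complex.ofReal_inv, div_eq_mul_inv]

lemma integrable_firstDifference_mul_rpow {α : ℝ} (hα0 : 0 < α) (hα1 : α < 1) :
    Integrable (fun q : (EuclideanSpace ℝ (Fin n) × ℝ) × ℝ =>
      (φ q.1 - φ (q.1 - (0, q.2))) * ((q.2 ^ (-1 - α) : ℝ) : ℂ))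
      (volume.prod (volume.restrict (Ioi 0))) := by
  obtain ⟨C, hC⟩ := φ.exists_integral_norm_sub_le volume
  have hφ : Integrable φ := φ.integrable
  refine integrable_prod_of_integral_norm_le ?_
    ((integrableOn_min_pow_mul_rpow hα0 (k := 1) (by simpa)).const_mul C) ?_ ?_
  · have hc : Continuous fun q : (EuclideanSpace ℝ (Fin n) × ℝ) × ℝ =>
        φ q.1 - φ (q.1 - (0, q.2)) := by
      have := φ.continuous
      fun_prop
    refine hc.aestronglyMeasurable.mul (Measurable.aestronglyMeasurable ?_)
    fun_prop
  · refine .of_forall fun r => ?_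
    have h : Integrable fun p => φ (p - (0, r)) := hφ.comp_sub_right _
    exact (hφ.sub h).mul_const ((r ^ (-1 - α) : ℝ) : ℂ)
  · refine (ae_restrict_iff' measurableSet_Ioi).2 (.of_forall fun r (hr : 0 < r) => ?_)
    have h0 : 0 < r ^ (-1 - α) := by positivity
    simp only [norm_mul, Complex.norm_real, Real.norm_of_nonneg h0.le]
    rw [integral_mul_const, ← mul_assoc]
    have hnorm : ‖((0, r) : EuclideanSpace ℝ (Fin n) × ℝ)‖ = r := by
      simp [Prod.norm_def, abs_of_pos hr, hr.le]
    have := hC (0, r)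
    rw [hnorm] at this
    gcongr

lemma integrable_marchaudLeftC {α : ℝ} (hα0 : 0 < α) (hα1 : α < 1) :
    Integrable (fun p : EuclideanSpace ℝ (Fin n) × ℝ => marchaudLeftC α φ p.1 p.2) := by
  simp_rw [marchaudLeftC_eq]
  exact (integrable_firstDifference_mul_rpow φ hα0 hα1).integral_prod_left.const_mul _

lemma integral_spaceTimeChar_mul_marchaudLeftC {α : ℝ} (hα0 : 0 < α) (hα1 : α < 1)
    (ξ : EuclideanSpace ℝ (Fin n)) (ρ : ℝ) :
    ∫ p, spaceTimeChar ξ ρ p * marchaudLeftC α φ p.1 p.2 =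
      (Complex.I * (ρ : ℂ)) ^ (α : ℂ) * ∫ p, spaceTimeChar ξ ρ p * φ p := by
  have hφ : Integrable φ := φ.integrable
  have hinner (r : ℝ) : ∫ p, spaceTimeChar ξ ρ p *
      ((φ p - φ (p - (0, r))) * ((r ^ (-1 - α) : ℝ) : ℂ)) =
      (1 - Complex.exp (-(Complex.I * ρ) * r)) * ((r ^ (-1 - α) : ℝ) : ℂ) *
        ∫ p, spaceTimeChar ξ ρ p * φ p := by
    have h1 := integrable_spaceTimeChar_mul ξ ρ hφ
    have h2 := integrable_spaceTimeChar_mul ξ ρ (hφ.comp_add_right (-(0, r)))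
    simp_rw [sub_eq_add_neg _ ((0, r) : EuclideanSpace ℝ (Fin n) × ℝ), ← mul_assoc, mul_sub]
    rw [integral_mul_const, integral_sub h1 h2, integral_spaceTimeChar_mul_comp_add, neg_neg]
    have : spaceTimeChar ξ ρ (0, r) = Complex.exp (-(Complex.I * ρ) * r) := by
      simp only [spaceTimeChar, inner_zero_right]
      congr 1
      push_cast
      ring
    rw [this]
    ring
  simp_rw [marchaudLeftC_eq, mul_left_comm _ (Calpha α : ℂ)]
  rw [integral_const_mul,
    integral_spaceTimeChar_mul_integral ξ ρ (integrable_firstDifference_mul_rpow φ hα0 hα1)]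
  simp_rw [hinner]
  rw [integral_mul_const, ← marchaudSymbol, marchaudSymbol_eq hα0 hα1 (by simp), Calpha,
    abs_Gamma_neg hα0 hα1, ← mul_assoc, ← mul_assoc, ← Complex.ofReal_mul]
  have hpos : 0 < Real.Gamma (1 - α) := Real.Gamma_pos_of_pos (by linarith)
  rw [one_div_mul_cancel (by positivity), Complex.ofReal_one, one_mul]

end Marchaud

section FracLap

variable {n : ℕ} (φ : SchwartzMap (EuclideanSpace ℝ (Fin n) × ℝ) ℂ)

lemma fracLapC_eq {n : ℕ} (s : ℝ) (φ : EuclideanSpace ℝ (Fin n) × ℝ → ℂ)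
    (p : EuclideanSpace ℝ (Fin n) × ℝ) :
    fracLapC s φ p.1 p.2 = ((Cns n s / 2 : ℝ) : ℂ) * ∫ y : EuclideanSpace ℝ (Fin n),
      (φ p + φ p - φ (p + (y, 0)) - φ (p - (y, 0))) / ((‖y‖ ^ ((n : ℝ) + 2 * s) : ℝ) : ℂ) := by
  obtain ⟨x, t⟩ := p
  simp [fracLapC, two_mul]

lemma integrable_secondDifference_div (hn : 1 ≤ n) {s : ℝ} (hs0 : 0 < s) (hs1 : s < 1) :
    Integrable (fun q : (EuclideanSpace ℝ (Fin n) × ℝ) × EuclideanSpace ℝ (Fin n) =>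
      (φ q.1 + φ q.1 - φ (q.1 + (q.2, 0)) - φ (q.1 - (q.2, 0))) /
        ((‖q.2‖ ^ ((n : ℝ) + 2 * s) : ℝ) : ℂ))
      (volume.prod volume) := by
  obtain ⟨C, hC⟩ := φ.exists_integral_norm_second_difference_le volume
  have hφ : Integrable φ := φ.integrable
  refine integrable_prod_of_integral_norm_le ?_
    ((integrable_min_norm_sq_mul_rpow hn hs0 hs1).const_mul C) ?_ ?_
  · have hc : Continuous fun q : (EuclideanSpace ℝ (Fin n) × ℝ) × EuclideanSpace ℝ (Fin n) =>
        φ q.1 + φ q.1 - φ (q.1 + (q.2, 0)) - φ (q.1 - (q.2, 0)) := by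
      have := φ.continuous
      fun_prop
    refine hc.aestronglyMeasurable.div₀ (Measurable.aestronglyMeasurable ?_)
    fun_prop
  · refine .of_forall fun y => ?_
    have h1 : Integrable fun p => φ (p + (y, 0)) := hφ.comp_add_right _
    have h2 : Integrable fun p => φ (p - (y, 0)) := hφ.comp_sub_right _
    exact (((hφ.add hφ).sub h1).sub h2).div_const ((‖y‖ ^ ((n : ℝ) + 2 * s) : ℝ) : ℂ)
  · refine .of_forall fun y => ?_
    have h0 : 0 ≤ ‖y‖ ^ ((n : ℝ) + 2 * s) := by positivity
    simp only [norm_div, Complex.norm_real, Real.norm_of_nonneg h0]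
    rw [integral_div, div_eq_mul_inv, ← mul_assoc]
    have hnorm : ‖((y, 0) : EuclideanSpace ℝ (Fin n) × ℝ)‖ = ‖y‖ := by simp [Prod.norm_def]
    have := hC (y, 0)
    rw [hnorm] at this
    gcongr

lemma integrable_fracLapC (hn : 1 ≤ n) {s : ℝ} (hs0 : 0 < s) (hs1 : s < 1) :
    Integrable (fun p : EuclideanSpace ℝ (Fin n) × ℝ => fracLapC s φ p.1 p.2) := by
  simp_rw [fracLapC_eq]
  exact (integrable_secondDifference_div φ hn hs0 hs1).integral_prod_left.const_mul _

lemma Cns_mul_integral_secondDifferenceSymbol_div (hn : 1 ≤ n) {s : ℝ} (hs0 : 0 < s) (hs1 : s < 1)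
    (ξ : EuclideanSpace ℝ (Fin n)) :
    ((Cns n s / 2 : ℝ) : ℂ) * ∫ y : EuclideanSpace ℝ (Fin n),
      secondDifferenceSymbol ξ y / ((‖y‖ ^ ((n : ℝ) + 2 * s) : ℝ) : ℂ) =
      ((‖ξ‖ ^ (2 * s) : ℝ) : ℂ) := by
  have hΓ : 0 < Real.Gamma ((n : ℝ) / 2 + s) := Real.Gamma_pos_of_pos (by positivity)
  have hΓ' : 0 < Real.Gamma (1 - s) := Real.Gamma_pos_of_pos (by linarith)
  have hπ : 0 < Real.pi ^ ((n : ℝ) / 2) := by positivity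
  have hc : Cns n s / 2 = (4 ^ s / (2 * Real.pi ^ ((n : ℝ) / 2) * (Real.Gamma (1 - s) / s))) *
      Real.Gamma ((n : ℝ) / 2 + s) := by
    rw [Cns, abs_Gamma_neg hs0 hs1]
    field_simp
  rw [hc, Complex.ofReal_mul, mul_assoc, integral_secondDifferenceSymbol_div ξ hn hs0 hs1,
    marchaudSymbol_eq hs0 hs1 (by rw [Complex.ofReal_re]; positivity),
    ← Complex.ofReal_cpow (by positivity)]
  norm_cast
  have hpow : (4 : ℝ) ^ s * (‖ξ‖ ^ 2 / 4) ^ s = ‖ξ‖ ^ (2 * s) := by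
    rw [← Real.mul_rpow (by norm_num) (by positivity), mul_div_cancel₀ _ (by norm_num),
      ← Real.rpow_natCast, ← Real.rpow_mul (norm_nonneg ξ)]
    norm_num
  rw [← hpow]
  field_simp

lemma integral_spaceTimeChar_mul_fracLapC (hn : 1 ≤ n) {s : ℝ} (hs0 : 0 < s) (hs1 : s < 1)
    (ξ : EuclideanSpace ℝ (Fin n)) (ρ : ℝ) :
    ∫ p, spaceTimeChar ξ ρ p * fracLapC s φ p.1 p.2 =
      ((‖ξ‖ ^ (2 * s) : ℝ) : ℂ) * ∫ p, spaceTimeChar ξ ρ p * φ p := by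
  have hφ : Integrable φ := φ.integrable
  have hinner (y : EuclideanSpace ℝ (Fin n)) : ∫ p, spaceTimeChar ξ ρ p *
      ((φ p + φ p - φ (p + (y, 0)) - φ (p - (y, 0))) / ((‖y‖ ^ ((n : ℝ) + 2 * s) : ℝ) : ℂ)) =
      secondDifferenceSymbol ξ y / ((‖y‖ ^ ((n : ℝ) + 2 * s) : ℝ) : ℂ) *
        ∫ p, spaceTimeChar ξ ρ p * φ p := by
    have h1 := integrable_spaceTimeChar_mul ξ ρ hφ
    have h2 := integrable_spaceTimeChar_mul ξ ρ (hφ.comp_add_right (y, 0))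
    have h3 := integrable_spaceTimeChar_mul ξ ρ (hφ.comp_add_right (-(y, 0)))
    have h4 : Integrable fun p => spaceTimeChar ξ ρ p * φ p + spaceTimeChar ξ ρ p * φ p :=
      h1.add h1
    have h5 : Integrable fun p => spaceTimeChar ξ ρ p * φ p + spaceTimeChar ξ ρ p * φ p -
        spaceTimeChar ξ ρ p * φ (p + (y, 0)) := h4.sub h2
    simp_rw [sub_eq_add_neg _ ((y, 0) : EuclideanSpace ℝ (Fin n) × ℝ), ← mul_div_assoc, mul_sub,
      mul_add]
    rw [integral_div, integral_sub h5 h3, integral_sub h4 h2, integral_add h1 h1,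
      integral_spaceTimeChar_mul_comp_add, integral_spaceTimeChar_mul_comp_add, neg_neg]
    have e1 : spaceTimeChar ξ ρ (y, 0) = Complex.exp (-Complex.I * (inner ℝ ξ y : ℝ)) := by
      simp [spaceTimeChar]
    have e2 : spaceTimeChar ξ ρ (-(y, 0)) = Complex.exp (Complex.I * (inner ℝ ξ y : ℝ)) := by
      simp [spaceTimeChar]
    rw [e1, e2, secondDifferenceSymbol]
    ring
  simp_rw [fracLapC_eq, mul_left_comm _ ((Cns n s / 2 : ℝ) : ℂ)]
  rw [integral_const_mul,
    integral_spaceTimeChar_mul_integral ξ ρ (integrable_secondDifference_div φ hn hs0 hs1)]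
  simp_rw [hinner]
  rw [integral_mul_const, ← mul_assoc, Cns_mul_integral_secondDifferenceSymbol_div hn hs0 hs1]

end FracLap

/-- for a complex-valued Schwartz function `φ` on `ℝⁿ × ℝ`, the function
`D_left^α φ + (-Δ)^s φ` is integrable and
`𝓕[D_left^α φ + (-Δ)^s φ](ξ,ρ) = ((iρ)^α + |ξ|^{2s})·𝓕φ(ξ,ρ)`. -/
theorem fourier_transform_left_marchaud_plus_fracLap
    (n : ℕ) (hn : 1 ≤ n) (α s : ℝ) (hα0 : 0 < α) (hα1 : α < 1)
    (hs0 : 0 < s) (hs1 : s < 1)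
    (φ : SchwartzMap (EuclideanSpace ℝ (Fin n) × ℝ) ℂ) :
    Integrable (fun p : EuclideanSpace ℝ (Fin n) × ℝ =>
      marchaudLeftC α (⇑φ) p.1 p.2 + fracLapC s (⇑φ) p.1 p.2) ∧
    ∀ (ξ : EuclideanSpace ℝ (Fin n)) (ρ : ℝ),
      fourierTrans (fun p => marchaudLeftC α (⇑φ) p.1 p.2 + fracLapC s (⇑φ) p.1 p.2) ξ ρ =
        ((Complex.I * (ρ : ℂ)) ^ (α : ℂ) + ((‖ξ‖ ^ (2 * s) : ℝ) : ℂ)) *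
          fourierTrans (⇑φ) ξ ρ := by
  have hM := integrable_marchaudLeftC φ hα0 hα1
  have hL := integrable_fracLapC φ hn hs0 hs1
  refine ⟨hM.add hL, fun ξ ρ => ?_⟩
  simp_rw [fourierTrans_eq, mul_add (spaceTimeChar _ _ _)]
  rw [integral_add (integrable_spaceTimeChar_mul ξ ρ hM) (integrable_spaceTimeChar_mul ξ ρ hL),
    integral_spaceTimeChar_mul_marchaudLeftC φ hα0 hα1,
    integral_spaceTimeChar_mul_fracLapC φ hn hs0 hs1]
  ring
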